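/- Let μ• ∈ 𝒱^ω and let Fix(J) = {x ∈ ℝ^N : Jx = x}. Then {h ∈ V ∩ Fix(J) : h ≥_w μ_w for all w ∈ W^ω} = {h ∈ V : h ≥_w μ_w for all w ∈ W} ∩ Fix(J); that is, the folded polytope cut out by the conditions at ω-fixed Weyl group elements equals the intersection of the full pseudo-Weyl polytope P(μ•) with the fixed subspace of J. -/

import Mathlib

/-!
For `h ∈ V`, the relation `h ≥_w μ_w` says that for every `i` the sum of `h` over the set
`S = w{1,…,i}` is at least the sum of `μ_w` over `S` (`geOrd_iff`).

A `J`-fixed vector is odd under the reversal `rev : k ↦ N+1-k`, so it sums to zero over the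
`rev`-stable set `S ∩ rev S`; hence its sums over `S` and over `T = S \ rev S` agree
(`sum_sdiff_rev`). The set `T` is disjoint from `rev T`, so `T = v{1,…,|T|}` for some
permutation `v` commuting with `rev` (`exists_comm_extend`), that is, an `ω`-fixed `v`. Then `μ_v`
is itself `J`-fixed, and
`h(S) = h(T) ≥ μ_v(T) = μ_v(S) ≥ μ_w(S)`:
the first inequality is the condition on `h` at `v`, the second is `μ_v ≥_w μ_w`.
-/

namespace MV

/-- The action of a permutation `w` on `ℝ^N`: `(w·x)_k = x_{w⁻¹(k)}`. -/
def act (ℓ : ℕ) (w : Equiv.Perm (Fin (ℓ+1))) (x : Fin (ℓ+1) → ℝ) : Fin (ℓ+1) → ℝ :=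
  fun k => x (w⁻¹ k)

/-- The subspace `V = {x ∈ ℝ^N : Σ x_k = 0}`. -/
def Vsub (ℓ : ℕ) : Set (Fin (ℓ+1) → ℝ) := {x | ∑ k, x k = 0}

/-- The simple coroot `h_i = e_i - e_{i+1}` (here `i : Fin ℓ` encodes the 1-based index `i+1`). -/
def coroot (ℓ : ℕ) (i : Fin ℓ) : Fin (ℓ+1) → ℝ :=
  fun k => (if (k : ℕ) = (i : ℕ) then 1 else 0) - (if (k : ℕ) = (i : ℕ) + 1 then 1 else 0)

/-- The cone `Σ_{j∈I} ℝ_{≥0} h_j`. -/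
def corootCone (ℓ : ℕ) : Set (Fin (ℓ+1) → ℝ) :=
  {x | ∃ c : Fin ℓ → ℝ, (∀ j, 0 ≤ c j) ∧ x = ∑ j, c j • coroot ℓ j}

/-- The partial order `h ≥_w h'`. -/
def geOrd (ℓ : ℕ) (w : Equiv.Perm (Fin (ℓ+1))) (h h' : Fin (ℓ+1) → ℝ) : Prop :=
  act ℓ w⁻¹ (h - h') ∈ corootCone ℓ

/-- The simple reflection `s_i`, the transposition of (1-based) `i` and `i+1`. -/
def simpleRefl (ℓ : ℕ) (i : Fin ℓ) : Equiv.Perm (Fin (ℓ+1)) :=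
  Equiv.swap i.castSucc i.succ

/-- The longest element `w₀ : k ↦ N+1-k`. -/
def w0 (ℓ : ℕ) : Equiv.Perm (Fin (ℓ+1)) := Fin.revPerm

/-- The chamber weight functional `w·Λ_i : x ↦ x_{w(1)} + ⋯ + x_{w(i)}`. -/
def chamberWt (ℓ : ℕ) (w : Equiv.Perm (Fin (ℓ+1))) (i : Fin ℓ) (x : Fin (ℓ+1) → ℝ) : ℝ :=
  ∑ k ∈ Finset.univ.filter (fun k : Fin (ℓ+1) => (k : ℕ) ≤ (i : ℕ)), x (w k)

/-- The set `𝒱` of GGMS data. -/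
def calV (ℓ : ℕ) : Set (Equiv.Perm (Fin (ℓ+1)) → Fin (ℓ+1) → ℝ) :=
  {μ | (∀ w, μ w ∈ Vsub ℓ) ∧ (∀ w w', geOrd ℓ w (μ w') (μ w)) ∧ μ (w0 ℓ) = 0}

/-- The Cartan matrix of type `A_ℓ`. -/
def cartan (ℓ : ℕ) (i j : Fin ℓ) : ℝ :=
  if i = j then 2 else if (i : ℕ) + 1 = (j : ℕ) ∨ (j : ℕ) + 1 = (i : ℕ) then -1 else 0

/-- The linear involution `J : (Jx)_k = -x_{N+1-k}`. -/
def Jmap (ℓ : ℕ) (x : Fin (ℓ+1) → ℝ) : Fin (ℓ+1) → ℝ := fun k => - x k.rev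

/-- Nat-indexed (0-based) simple coroot, used for the folded coroots. -/
def corootN (ℓ : ℕ) (j : ℕ) : Fin (ℓ+1) → ℝ :=
  fun k => (if (k : ℕ) = j then 1 else 0) - (if (k : ℕ) = j + 1 then 1 else 0)

/-- The folded simple coroot `h_j^ω` (here `j : Fin n` encodes the 1-based index `j+1`):
`h_j^ω = h_j + h_{ℓ+1-j}` for `1 ≤ j ≤ n-1`, `h_n^ω = h_n` if `ℓ = 2n-1`, and
`h_n^ω = 2(h_n + h_{n+1})` if `ℓ = 2n`. -/
def fcoroot (ℓ n : ℕ) (j : Fin n) : Fin (ℓ+1) → ℝ :=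
  if (j : ℕ) + 1 < n then corootN ℓ j + corootN ℓ (ℓ - 1 - j)
  else if ℓ = 2 * n - 1 then corootN ℓ j
  else (2 : ℝ) • (corootN ℓ j + corootN ℓ ((j : ℕ) + 1))

/-- The folded coroot cone `Σ_{j=1}^{n} ℝ_{≥0} h_j^ω`. -/
def fcone (ℓ n : ℕ) : Set (Fin (ℓ+1) → ℝ) :=
  {x | ∃ c : Fin n → ℝ, (∀ j, 0 ≤ c j) ∧ x = ∑ j, c j • fcoroot ℓ n j}


/-- The simple transposition `s_{a+1}` (0-based `a`) in the symmetric group of `{1,…,m+1}`. -/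
def swN (m a : ℕ) : Equiv.Perm (Fin (m+1)) :=
  if h : a + 1 ≤ m then Equiv.swap ⟨a, by omega⟩ ⟨a + 1, by omega⟩ else 1

end MV

open MV

namespace MV

open Finset

/-- A vector of sum zero lies in the cone iff all
its initial partial sums are nonnegative. -/
lemma mem_corootCone_iff (ℓ : ℕ) (x : Fin (ℓ+1) → ℝ) (hx : ∑ k, x k = 0) :
    x ∈ corootCone ℓ ↔ ∀ i : ℕ, 0 ≤ ∑ k with k.val < i, x k := by
  constructor
  · rintro ⟨c, hc, rfl⟩ i
    simp only [Finset.sum_apply, Pi.smul_apply, smul_eq_mul]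
    rw [Finset.sum_comm]
    refine Finset.sum_nonneg fun j _ => ?_
    rw [← Finset.mul_sum]
    refine mul_nonneg (hc j) ?_
    have e1 : ∀ k : Fin (ℓ+1), (k : ℕ) = j ↔ k = j.castSucc := fun k => by
      simp [Fin.ext_iff]
    have e2 : ∀ k : Fin (ℓ+1), (k : ℕ) = j + 1 ↔ k = j.succ := fun k => by
      simp [Fin.ext_iff]
    simp only [coroot, e1, e2, Finset.sum_sub_distrib, Finset.sum_ite_eq', Finset.mem_filter,
      Finset.mem_univ, true_and, Fin.val_castSucc, Fin.val_succ]
    split_ifs <;> first | omega | norm_num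
  · intro h
    refine ⟨fun j => ∑ k with k.val < (j : ℕ) + 1, x k, fun j => h _, ?_⟩
    -- `p i` is the sum of the first `i` coordinates; `x` is recovered as its difference sequence
    set p : ℕ → ℝ := fun i => ∑ k with k.val < i, x k with hp
    have p0 : p 0 = 0 := by simp [hp]
    have pN : p (ℓ+1) = 0 := by
      have : (univ.filter fun k : Fin (ℓ+1) => k.val < ℓ+1) = univ := by
        ext k; simp; omega
      simp only [hp, this, hx]
    have pS : ∀ m : Fin (ℓ+1), p (m + 1) = p m + x m := fun m => by
      have : (univ.filter fun k : Fin (ℓ+1) => k.val < m.val + 1)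
          = insert m (univ.filter fun k : Fin (ℓ+1) => k.val < m.val) := by
        ext k; simp [Fin.ext_iff]; omega
      simp only [hp, this]
      rw [Finset.sum_insert (by simp)]; ring
    funext m
    simp only [Finset.sum_apply, Pi.smul_apply, smul_eq_mul, coroot, mul_sub, mul_ite, mul_one,
      mul_zero, Finset.sum_sub_distrib]
    have a1 : (∑ j : Fin ℓ, if (m : ℕ) = j then p (j + 1) else 0) = p (m + 1) := by
      by_cases hm : (m : ℕ) < ℓ
      · rw [Finset.sum_eq_single (⟨m, hm⟩ : Fin ℓ)]
        · simp
        · intro b _ hb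
          rw [if_neg]
          intro hh; exact hb (Fin.ext hh.symm)
        · simp
      · have : (m : ℕ) = ℓ := by omega
        rw [this, pN]
        refine Finset.sum_eq_zero fun j _ => if_neg ?_
        omega
    have a2 : (∑ j : Fin ℓ, if (m : ℕ) = j + 1 then p (j + 1) else 0) = p m := by
      by_cases hm : (m : ℕ) = 0
      · rw [hm, p0]
        refine Finset.sum_eq_zero fun j _ => if_neg ?_
        omega
      · rw [Finset.sum_eq_single (⟨m - 1, by omega⟩ : Fin ℓ)]
        · have : (m : ℕ) = m - 1 + 1 := by omega
          simp [← this]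
        · intro b _ hb
          rw [if_neg]
          intro hh; exact hb (Fin.ext (by simp; omega))
        · simp
    rw [a1, a2, pS]; ring

lemma geOrd_iff (ℓ : ℕ) (w : Equiv.Perm (Fin (ℓ+1))) (h h' : Fin (ℓ+1) → ℝ)
    (hh : h ∈ Vsub ℓ) (hh' : h' ∈ Vsub ℓ) :
    geOrd ℓ w h h' ↔
      ∀ i : ℕ, ∑ k with k.val < i, h' (w k) ≤ ∑ k with k.val < i, h (w k) := by
  have hs : ∑ k, act ℓ w⁻¹ (h - h') k = 0 := by
    have h1 : ∑ k, h k = 0 := hh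
    have h2 : ∑ k, h' k = 0 := hh'
    simp only [act, inv_inv, Pi.sub_apply, Finset.sum_sub_distrib]
    rw [Equiv.sum_comp w h, Equiv.sum_comp w h', h1, h2, sub_zero]
  unfold geOrd
  rw [mem_corootCone_iff ℓ _ hs]
  simp only [act, inv_inv, Pi.sub_apply, Finset.sum_sub_distrib, sub_nonneg]

/-- A vector odd under reversal has the same sum over `S` as over `S \ rev S`, because its sum over
the reversal-stable set `S ∩ rev S` vanishes. -/
lemma sum_sdiff_rev (ℓ : ℕ) (x : Fin (ℓ+1) → ℝ) (hx : Jmap ℓ x = x) (S : Finset (Fin (ℓ+1))) :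
    ∑ k ∈ S with k.rev ∉ S, x k = ∑ k ∈ S, x k := by
  have hodd : ∀ k, x k.rev = - x k := fun k => by
    have := congrFun hx k
    simp only [Jmap] at this
    linarith
  have hz : ∑ k ∈ S with ¬ k.rev ∉ S, x k = 0 := by
    have : ∑ k ∈ S with ¬ k.rev ∉ S, x k = ∑ k ∈ S with ¬ k.rev ∉ S, - x k := by
      refine Finset.sum_bij' (fun k _ => k.rev) (fun k _ => k.rev) ?_ ?_ ?_ ?_ ?_
      · intro k hk; simp at hk ⊢; exact hk.symm
      · intro k hk; simp at hk ⊢; exact hk.symm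
      · intro k _; simp
      · intro k _; simp
      · intro k _; simp [hodd]
    rw [Finset.sum_neg_distrib] at this
    linarith
  have := Finset.sum_filter_add_sum_filter_not S (fun k => k.rev ∉ S) x
  linarith

/-- For `a` and `b` not fixed by reversal, some permutation commuting with
reversal takes `b` to `a` and moves no point outside `{a, b, rev a, rev b}`. -/
lemma exists_comm_move (ℓ : ℕ) (a b : Fin (ℓ+1)) (ha : a ≠ a.rev) (hb : b ≠ b.rev) :
    ∃ u : Equiv.Perm (Fin (ℓ+1)), (∀ k, u k.rev = (u k).rev) ∧ u b = a ∧
      ∀ k, k ≠ a → k ≠ b → k ≠ a.rev → k ≠ b.rev → u k = k := by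
  by_cases hab : a = b.rev
  · refine ⟨Equiv.swap a b, fun k => ?_, by simp, fun k h1 h2 _ _ =>
      Equiv.swap_apply_of_ne_of_ne h1 h2⟩
    subst hab
    simp only [Equiv.swap_apply_def, Fin.rev_rev, Fin.rev_eq_iff]
    grind [Fin.rev_rev]
  · refine ⟨Equiv.swap a b * Equiv.swap a.rev b.rev, fun k => ?_, ?_, fun k h1 h2 h3 h4 => ?_⟩
    · simp only [Equiv.Perm.mul_apply, Equiv.swap_apply_def]
      grind [Fin.rev_rev]
    · simp only [Equiv.Perm.mul_apply, Equiv.swap_apply_def]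
      grind [Fin.rev_rev]
    · simp only [Equiv.Perm.mul_apply]
      rw [Equiv.swap_apply_of_ne_of_ne h3 h4, Equiv.swap_apply_of_ne_of_ne h1 h2]

/-- A sequence of `t` distinct indices, none the reversal of another or of itself, is the
sequence of first `t` values of a permutation commuting with reversal. -/
lemma exists_comm_extend (ℓ t : ℕ) (ht : 2 * t ≤ ℓ + 1) (f : ℕ → Fin (ℓ+1))
    (hinj : ∀ i < t, ∀ j < t, f i = f j → i = j)
    (hrev : ∀ i < t, ∀ j < t, f i ≠ (f j).rev) :
    ∃ v : Equiv.Perm (Fin (ℓ+1)), (∀ k, v k.rev = (v k).rev) ∧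
      ∀ k : Fin (ℓ+1), k.val < t → v k = f k.val := by
  induction t with
  | zero => exact ⟨1, by simp, by simp⟩
  | succ t ih =>
    obtain ⟨v, hv, hvf⟩ := ih (by omega) (fun i hi j hj => hinj i (by omega) j (by omega))
      (fun i hi j hj => hrev i (by omega) j (by omega))
    let q : Fin (ℓ+1) := ⟨t, by omega⟩
    have hq : ∀ k : Fin (ℓ+1), k.val < t + 1 → k ≠ q.rev := fun k hk h => by
      have := congrArg Fin.val h
      simp [Fin.val_rev, q] at this
      omega
    obtain ⟨u, hu, hub, huk⟩ := exists_comm_move ℓ (f t) (v q)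
      (hrev t (by omega) t (by omega))
      (fun h => hq q (by simp [q]) (v.injective (by rw [hv]; exact h)))
    refine ⟨u * v, fun k => by simp [hv, hu], fun k hk => ?_⟩
    rw [Equiv.Perm.mul_apply]
    rcases Nat.lt_succ_iff_lt_or_eq.mp hk with hk' | hk'
    · rw [huk (v k), hvf k hk']
      · rw [hvf k hk']
        intro h
        have := hinj _ hk _ (by omega) h
        omega
      · intro h
        have := congrArg Fin.val (v.injective h)
        simp [q] at this
        omega
      · rw [hvf k hk']
        exact hrev _ hk _ (by omega)
      · intro h
        rw [← hv] at h
        exact hq k hk (v.injective h)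
    · have : k = q := Fin.ext hk'
      rw [this, hub]

lemma exists_comm_image (ℓ : ℕ) (T : Finset (Fin (ℓ+1)))
    (hT : ∀ a ∈ T, a.rev ∉ T) :
    ∃ v : Equiv.Perm (Fin (ℓ+1)), (∀ k, v k.rev = (v k).rev) ∧
      (univ.filter fun k : Fin (ℓ+1) => k.val < T.card).map v.toEmbedding = T := by
  have hcard : 2 * T.card ≤ ℓ + 1 := by
    have hd : Disjoint T (T.map Fin.revPerm.toEmbedding) := by
      rw [Finset.disjoint_left]
      intro a ha h
      simp only [Finset.mem_map, Equiv.coe_toEmbedding, Fin.revPerm_apply] at h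
      obtain ⟨b, hb, rfl⟩ := h
      exact hT b hb ha
    have h1 := Finset.card_union_of_disjoint hd
    have h2 := Finset.card_le_univ (T ∪ T.map Fin.revPerm.toEmbedding)
    simp only [Finset.card_map, Fintype.card_fin] at h1 h2
    omega
  let e := T.equivFin
  let f : ℕ → Fin (ℓ+1) := fun i => if hi : i < T.card then (e.symm ⟨i, hi⟩ : Fin (ℓ+1)) else 0
  have hf : ∀ i (hi : i < T.card), f i = e.symm ⟨i, hi⟩ := fun i hi => dif_pos hi
  have hfT : ∀ i < T.card, f i ∈ T := fun i hi => by
    rw [hf i hi]; exact (e.symm ⟨i, hi⟩).2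
  obtain ⟨v, hv, hvf⟩ := exists_comm_extend ℓ T.card hcard f
    (fun i hi j hj h => by
      rw [hf i hi, hf j hj] at h
      simpa using e.symm.injective (Subtype.ext h))
    (fun i hi j hj h => hT _ (hfT j hj) (h ▸ hfT i hi))
  refine ⟨v, hv, Finset.eq_of_subset_of_card_le ?_ ?_⟩
  · intro a ha
    simp only [Finset.mem_map, Finset.mem_filter, Finset.mem_univ, true_and,
      Equiv.coe_toEmbedding] at ha
    obtain ⟨k, hk, rfl⟩ := ha
    rw [hvf k hk]
    exact hfT _ hk
  · rw [Finset.card_map, Fin.card_filter_val_lt]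
    exact le_min (by omega) le_rfl

end MV

/-- the folded polytope cut out by the conditions at `ω`-fixed Weyl group
elements equals the intersection of the full pseudo-Weyl polytope with `Fix(J)`. -/
theorem stmt15 (ℓ n : ℕ) (hn : 2 ≤ n) (hln : ℓ = 2 * n - 1 ∨ ℓ = 2 * n)
    (μ : Equiv.Perm (Fin (ℓ+1)) → Fin (ℓ+1) → ℝ) (hμ : μ ∈ calV ℓ)
    (hfix : ∀ w, Jmap ℓ (μ (w0 ℓ * w * w0 ℓ)) = μ w) :
    {h | h ∈ Vsub ℓ ∧ Jmap ℓ h = h ∧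
        ∀ w : Equiv.Perm (Fin (ℓ+1)), w0 ℓ * w * w0 ℓ = w → geOrd ℓ w h (μ w)}
    = {h | h ∈ Vsub ℓ ∧ ∀ w, geOrd ℓ w h (μ w)} ∩ {h | Jmap ℓ h = h} := by
  obtain ⟨hV, hge, -⟩ := hμ
  ext h
  constructor
  · rintro ⟨hhV, hJ, hh⟩
    refine ⟨⟨hhV, fun w => (geOrd_iff ℓ w h _ hhV (hV w)).2 fun i => ?_⟩, hJ⟩
    let S : Finset (Fin (ℓ+1)) :=
      (Finset.univ.filter fun k : Fin (ℓ+1) => k.val < i).map w.toEmbedding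
    let T : Finset (Fin (ℓ+1)) := S.filter fun k => k.rev ∉ S
    obtain ⟨v, hv, hvT⟩ := exists_comm_image ℓ T (by
      intro a ha ha'
      exact (Finset.mem_filter.1 ha).2 (Finset.mem_filter.1 ha').1)
    have hvfix : w0 ℓ * v * w0 ℓ = v := by
      ext k
      simp [w0, hv]
    have hJv : Jmap ℓ (μ v) = μ v := by
      have := hfix v
      rwa [hvfix] at this
    have hsum : ∀ x : Fin (ℓ+1) → ℝ, ∑ k with k.val < i, x (w k) = ∑ k ∈ S, x k := fun x => by
      simp [S, Finset.sum_map]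
    have hsumT : ∀ x : Fin (ℓ+1) → ℝ,
        ∑ k with k.val < T.card, x (v k) = ∑ k ∈ T, x k := fun x => by
      conv_rhs => rw [← hvT]
      simp only [Finset.sum_map, Equiv.coe_toEmbedding]
    have h1 := (geOrd_iff ℓ v h _ hhV (hV v)).1 (hh v hvfix) T.card
    have h2 := (geOrd_iff ℓ w _ _ (hV v) (hV w)).1 (hge w v) i
    rw [hsumT, hsumT, sum_sdiff_rev ℓ _ hJ, sum_sdiff_rev ℓ _ hJv] at h1
    rw [hsum, hsum] at h2 ⊢
    exact h2.trans h1
  · rintro ⟨⟨hhV, hh⟩, hJ⟩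
    exact ⟨hhV, hJ, fun w _ => hh w⟩
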